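/- For every integer i ≥ 1, ν₂(S(8i+3, 5)) = 1 and ν₂(S(8i+7, 5)) ≥ 2; that is, S(8i+3,5) is exactly divisible by 2, and 4 divides S(8i+7,5). -/

import Mathlib

/-- Stirling numbers of the second kind, via the recurrence
`S(n+1,k+1) = S(n,k) + (k+1)·S(n,k+1)`. -/
def stirling2 : ℕ → ℕ → ℕ
  | 0, 0 => 1
  | 0, _ + 1 => 0
  | _ + 1, 0 => 0
  | n + 1, k + 1 => stirling2 n k + (k + 1) * stirling2 n (k + 1)

/-!
By the explicit formula `k! S(n,k) = ∑ j ≤ k, (-1)^(k+j) C(k,j) j^n`, any eventual period common to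
the sequences `n ↦ j^n` modulo `M` is an eventual period of `n ↦ k! S(n,k)` modulo `M`. Modulo
`2^(r+2)` the powers have period `2^r` from `n = r + 2` on: a sufficiently high power of an even
number vanishes, and an odd number has `2^r`-th power `1`. For `r = 3` and `k = 5`, cancelling
`5! = 8 · 15` modulo `32` shows that `S(n,5)` has period `8` modulo `4` for `n ≥ 5`, so that
`S(11,5) = 246730` and `S(7,5) = 140` decide the two residue classes.
-/

open Finset Nat

theorem stirling2_eq_stirlingSecond (n k : ℕ) : stirling2 n k = stirlingSecond n k := by
  fun_induction stirling2 n k with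
  | case1 | case2 | case3 => rfl
  | case4 n k ih₁ ih₂ => rw [stirlingSecond_succ_succ, ih₁, ih₂, add_comm]

theorem stirlingSecond_pos {n k : ℕ} (hk : 0 < k) (hkn : k ≤ n) : 0 < stirlingSecond n k := by
  induction n, hkn using Nat.le_induction with
  | base => simp only [stirlingSecond_self, Nat.one_pos]
  | succ n _ ih =>
    rw [stirlingSecond_succ_left n k hk.ne']
    positivity

theorem succ_choose_mul_eq_succ_mul_sub (k j : ℕ) :
    ((k + 1).choose j * j : ℤ) = (k + 1) * ((k + 1).choose j - k.choose j) := by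
  cases j with
  | zero => simp
  | succ j =>
    have absorption : ((k + 1) * k.choose j : ℤ) = (k + 1).choose (j + 1) * (j + 1) :=
      mod_cast Nat.add_one_mul_choose_eq k j
    push_cast [Nat.choose_succ_succ'] at absorption ⊢
    linear_combination -absorption

theorem sum_alternating_choose_mul_pow_succ (n k : ℕ) :
    ∑ j ∈ range (k + 2), (-1 : ℤ) ^ (k + 1 + j) * (k + 1).choose j * j ^ (n + 1) =
      (k + 1) * (∑ j ∈ range (k + 2), (-1 : ℤ) ^ (k + 1 + j) * (k + 1).choose j * j ^ n +
        ∑ j ∈ range (k + 1), (-1 : ℤ) ^ (k + j) * k.choose j * j ^ n) := by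
  have extend_range : ∑ j ∈ range (k + 1), (-1 : ℤ) ^ (k + j) * k.choose j * j ^ n =
      ∑ j ∈ range (k + 2), (-1 : ℤ) ^ (k + j) * k.choose j * j ^ n := by
    simp [sum_range_succ _ (k + 1)]
  rw [extend_range, ← sum_add_distrib, mul_sum]
  refine sum_congr rfl fun j _ ↦ ?_
  linear_combination (-1 : ℤ) ^ (k + 1 + j) * j ^ n * succ_choose_mul_eq_succ_mul_sub k j

theorem factorial_mul_stirlingSecond (n k : ℕ) :
    (k ! * stirlingSecond n k : ℤ) =
      ∑ j ∈ range (k + 1), (-1 : ℤ) ^ (k + j) * k.choose j * j ^ n := by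
  induction n generalizing k with
  | zero =>
    simp only [pow_zero, mul_one, pow_add, mul_assoc, ← mul_sum, Int.alternating_sum_range_choose]
    cases k <;> simp
  | succ n ih =>
    cases k with
    | zero => simp
    | succ k =>
      rw [sum_alternating_choose_mul_pow_succ, ← ih, ← ih, stirlingSecond_succ_succ,
        factorial_succ]
      push_cast
      ring

theorem factorial_mul_stirlingSecond_modEq {M m n : ℕ}
    (h : ∀ j : ℕ, (j : ℤ) ^ m ≡ j ^ n [ZMOD M]) (k : ℕ) :
    k ! * stirlingSecond m k ≡ k ! * stirlingSecond n k [MOD M] := by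
  rw [← Int.natCast_modEq_iff]
  push_cast
  rw [factorial_mul_stirlingSecond, factorial_mul_stirlingSecond]
  exact Int.ModEq.sum fun j _ ↦ (h j).mul_left _

theorem two_pow_add_two_dvd_pow_two_pow_sub_one {a : ℤ} (ha : Odd a) {r : ℕ}
    (hr : 1 ≤ r) : 2 ^ (r + 2) ∣ a ^ 2 ^ r - 1 := by
  induction r, hr using Nat.le_induction with
  | base => exact Int.eight_dvd_sq_sub_one_of_odd ha
  | succ r _ ih =>
    have factorization : a ^ 2 ^ (r + 1) - 1 = (a ^ 2 ^ r - 1) * (a ^ 2 ^ r + 1) := by ring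
    rw [factorization, show r + 1 + 2 = r + 2 + 1 from rfl, pow_succ]
    exact mul_dvd_mul ih (ha.pow.add_odd odd_one).two_dvd

theorem pow_add_two_pow_modEq (a : ℤ) {r n : ℕ} (hr : 1 ≤ r) (hn : r + 2 ≤ n) :
    a ^ (n + 2 ^ r) ≡ a ^ n [ZMOD 2 ^ (r + 2)] := by
  rw [Int.modEq_comm, Int.modEq_iff_dvd,
    show a ^ (n + 2 ^ r) - a ^ n = a ^ n * (a ^ 2 ^ r - 1) by ring]
  rcases Int.even_or_odd a with even | odd
  · exact ((pow_dvd_pow 2 hn).trans (pow_dvd_pow_of_dvd even.two_dvd n)).mul_right _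
  · exact (two_pow_add_two_dvd_pow_two_pow_sub_one odd hr).mul_left _

theorem stirlingSecond_add_two_pow_modEq {r n : ℕ} (hr : 1 ≤ r) (hn : r + 2 ≤ n) (k : ℕ) :
    stirlingSecond (n + 2 ^ r) k ≡ stirlingSecond n k
      [MOD 2 ^ (r + 2) / Nat.gcd (2 ^ (r + 2)) k !] := by
  refine Nat.ModEq.cancel_left_div_gcd (by positivity) ?_
  exact factorial_mul_stirlingSecond_modEq
    (fun j ↦ mod_cast pow_add_two_pow_modEq j hr hn) k

theorem stirlingSecond_five_add_eight_mul_modEq {n : ℕ} (hn : 5 ≤ n) (i : ℕ) :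
    stirlingSecond (n + 8 * i) 5 ≡ stirlingSecond n 5 [MOD 4] := by
  induction i with
  | zero => rfl
  | succ i ih =>
    have period : stirlingSecond (n + 8 * i + 2 ^ 3) 5 ≡ stirlingSecond (n + 8 * i) 5
        [MOD 2 ^ 5 / Nat.gcd (2 ^ 5) 5 !] :=
      stirlingSecond_add_two_pow_modEq (by lia) (by lia) 5
    have modulus_eq : 2 ^ 5 / Nat.gcd (2 ^ 5) 5 ! = 4 := by decide
    rw [modulus_eq] at period
    exact period.trans ih

theorem padicValNat_eq_of_pow_dvd_of_not_pow_dvd {p k n : ℕ} (hp : p ≠ 1) (hk : p ^ k ∣ n)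
    (hk' : ¬p ^ (k + 1) ∣ n) : padicValNat p n = k := by
  have hn : n ≠ 0 := fun h ↦ hk' (h ▸ dvd_zero _)
  rw [padicValNat_def' hp hn, multiplicity_eq_of_dvd_of_not_dvd hk hk']

/-- For i ≥ 1, ν₂(S(8i+3,5)) = 1 and ν₂(S(8i+7,5)) ≥ 2. -/
theorem nu2_stirling_five_8i3_8i7 (i : ℕ) (hi : 1 ≤ i) :
    padicValNat 2 (stirling2 (8 * i + 3) 5) = 1 ∧
    2 ≤ padicValNat 2 (stirling2 (8 * i + 7) 5) := by
  simp only [stirling2_eq_stirlingSecond]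
  constructor
  · obtain ⟨j, rfl⟩ := Nat.exists_eq_add_of_le hi
    have residue : stirlingSecond (8 * (1 + j) + 3) 5 ≡ 2 [MOD 4] := by
      rw [show 8 * (1 + j) + 3 = 11 + 8 * j by ring]
      exact (stirlingSecond_five_add_eight_mul_modEq (by lia) j).trans
        (show stirlingSecond 11 5 ≡ 2 [MOD 4] by decide)
    exact padicValNat_eq_of_pow_dvd_of_not_pow_dvd (by decide)
      ((residue.dvd_iff (by decide)).2 (by decide))
      (mt (residue.dvd_iff (by decide)).1 (by decide))
  · have residue : stirlingSecond (8 * i + 7) 5 ≡ 0 [MOD 4] := by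
      rw [add_comm]
      exact (stirlingSecond_five_add_eight_mul_modEq (by lia) i).trans
        (show stirlingSecond 7 5 ≡ 0 [MOD 4] by decide)
    have ne_zero : stirlingSecond (8 * i + 7) 5 ≠ 0 := (stirlingSecond_pos (by lia) (by lia)).ne'
    exact (padicValNat_dvd_iff_le ne_zero).1 (Nat.modEq_zero_iff_dvd.1 residue)
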